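/- arXiv:1312.6820 — 8 statements merged into one kernel-verified Lean document; each statement's English description precedes it below -/
import Mathlib

section
/- Let A be a real m×n matrix, S a subset of column indices of A such that the Gram matrix A_{:S}ᵀA_{:S} is invertible, and P a subset of S with R = S \ P, so that A_{:P}ᵀA_{:P} is also invertible. Let P^(P) = A_{:P}(A_{:P}ᵀA_{:P})⁻¹A_{:P}ᵀ and P^(S) = A_{:S}(A_{:S}ᵀA_{:S})⁻¹A_{:S}ᵀ, let E = A − P^(P)A, assume E_{:R}ᵀE_{:R} is invertible, and let R^(R) = E_{:R}(E_{:R}ᵀE_{:R})⁻¹E_{:R}ᵀ. Then P^(S) = P^(P) + R^(R). -/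
/-!
Replacing the columns `C = A_{:R}` by their residuals `C - B Z`, where `B = A_{:P}` and
`Z = (Bᴴ B)⁻¹ Bᴴ C`, multiplies the block matrix `[B, C]` on the right by a unipotent matrix, so it
does not change the associated projection. The residuals are orthogonal to `B`, hence the new Gram
matrix is block diagonal, and inverting it blockwise splits the projection into the two summands.
-/

open Matrix

/-- The `m × |S|` submatrix of `A` consisting of the columns indexed by `S`. -/
noncomputable def cols {m n : ℕ} (A : Matrix (Fin m) (Fin n) ℝ) (S : Finset (Fin n)) :
    Matrix (Fin m) {j // j ∈ S} ℝ :=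
  Matrix.of fun i j => A i j.val

/-- The projection matrix `A_{:S} (A_{:S}ᵀ A_{:S})⁻¹ A_{:S}ᵀ` onto the span of the columns of `A`
indexed by `S`. -/
noncomputable def proj {m n : ℕ} (A : Matrix (Fin m) (Fin n) ℝ) (S : Finset (Fin n)) :
    Matrix (Fin m) (Fin m) ℝ :=
  cols A S * ((cols A S)ᵀ * cols A S)⁻¹ * (cols A S)ᵀ

section ColumnProj

variable {m n k l R : Type*} [Fintype m] [Fintype k] [DecidableEq k] [Fintype l] [DecidableEq l]
  [CommRing R] [StarRing R]

/-- The orthogonal projection `X (Xᴴ X)⁻¹ Xᴴ` onto the span of the columns of `X`, over a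
commutative star ring, so that real and complex matrices are both covered. If the Gram matrix
`Xᴴ X` is not invertible, this is the junk value `0`. -/
noncomputable def columnProj (X : Matrix m k R) : Matrix m m R :=
  X * (Xᴴ * X)⁻¹ * Xᴴ

theorem conjTranspose_mul_columnProj {X : Matrix m k R} (hX : IsUnit (Xᴴ * X)) :
    Xᴴ * columnProj X = Xᴴ := by
  rw [columnProj, ← Matrix.mul_assoc, ← Matrix.mul_assoc,
    mul_nonsing_inv _ ((isUnit_iff_isUnit_det _).1 hX), Matrix.one_mul]

theorem conjTranspose_mul_sub_columnProj_mul {X : Matrix m k R} (hX : IsUnit (Xᴴ * X))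
    (Y : Matrix m n R) : Xᴴ * (Y - columnProj X * Y) = 0 := by
  rw [Matrix.mul_sub, ← Matrix.mul_assoc, conjTranspose_mul_columnProj hX, sub_self]

theorem columnProj_mul_of_isUnit (X : Matrix m k R) {U : Matrix k k R} (hU : IsUnit U) :
    columnProj (X * U) = columnProj X := by
  have hU_mul : U * U⁻¹ = 1 := mul_nonsing_inv _ ((isUnit_iff_isUnit_det _).1 hU)
  have hU_star : Uᴴ⁻¹ * Uᴴ = 1 := by
    rw [← conjTranspose_nonsing_inv, ← conjTranspose_mul, hU_mul, conjTranspose_one]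
  calc columnProj (X * U)
      = X * U * (Uᴴ * (Xᴴ * X) * U)⁻¹ * (Uᴴ * Xᴴ) := by
        simp only [columnProj, conjTranspose_mul, Matrix.mul_assoc]
    _ = X * (U * U⁻¹) * (Xᴴ * X)⁻¹ * (Uᴴ⁻¹ * Uᴴ) * Xᴴ := by
        rw [Matrix.mul_inv_rev, Matrix.mul_inv_rev]
        simp only [Matrix.mul_assoc]
    _ = columnProj X := by
        rw [hU_mul, hU_star, Matrix.mul_one, Matrix.mul_one, columnProj]

theorem columnProj_submatrix_equiv (X : Matrix m k R) (e : l ≃ k) :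
    columnProj (X.submatrix id e) = columnProj X := by
  rw [columnProj, conjTranspose_submatrix, ← submatrix_mul _ _ _ _ _ Function.bijective_id,
    inv_submatrix_equiv, submatrix_mul_equiv, submatrix_mul_equiv, submatrix_id_id, columnProj]

theorem columnProj_fromCols_sub_mul (X : Matrix m k R) (Y : Matrix m l R) (Z : Matrix k l R) :
    columnProj (fromCols X (Y - X * Z)) = columnProj (fromCols X Y) := by
  have hU : IsUnit (fromBlocks 1 (-Z) 0 1 : Matrix (k ⊕ l) (k ⊕ l) R) :=
    isUnit_fromBlocks_zero₂₁.2 ⟨isUnit_one, isUnit_one⟩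
  rw [← columnProj_mul_of_isUnit (fromCols X Y) hU, fromCols_mul_fromBlocks]
  simp only [Matrix.mul_one, Matrix.mul_zero, add_zero, Matrix.mul_neg, neg_add_eq_sub]

theorem columnProj_fromCols_of_conjTranspose_mul_eq_zero {X : Matrix m k R} {Y : Matrix m l R}
    (hX : IsUnit (Xᴴ * X)) (hY : IsUnit (Yᴴ * Y)) (hXY : Xᴴ * Y = 0) :
    columnProj (fromCols X Y) = columnProj X + columnProj Y := by
  have hYX : Yᴴ * X = 0 := by
    rw [← conjTranspose_conjTranspose X, ← conjTranspose_mul, hXY, conjTranspose_zero]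
  have gram_inv : ((fromCols X Y)ᴴ * fromCols X Y)⁻¹ =
      fromBlocks (Xᴴ * X)⁻¹ 0 0 (Yᴴ * Y)⁻¹ := by
    rw [conjTranspose_fromCols_eq_fromRows_conjTranspose, fromRows_mul_fromCols, hXY, hYX,
      inv_fromBlocks_zero₂₁_of_isUnit_iff _ _ _ (iff_of_true hX hY), Matrix.mul_zero,
      Matrix.zero_mul, neg_zero]
  rw [columnProj, gram_inv, conjTranspose_fromCols_eq_fromRows_conjTranspose,
    fromCols_mul_fromBlocks, fromCols_mul_fromRows]
  simp only [Matrix.mul_zero, add_zero, zero_add, columnProj]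

theorem columnProj_fromCols {X : Matrix m k R} {Y : Matrix m l R} (hX : IsUnit (Xᴴ * X))
    (hE : IsUnit ((Y - columnProj X * Y)ᴴ * (Y - columnProj X * Y))) :
    columnProj (fromCols X Y) = columnProj X + columnProj (Y - columnProj X * Y) := by
  have residual_eq : Y - columnProj X * Y = Y - X * ((Xᴴ * X)⁻¹ * Xᴴ * Y) := by
    simp only [columnProj, Matrix.mul_assoc]
  calc columnProj (fromCols X Y)
      = columnProj (fromCols X (Y - columnProj X * Y)) := by
        rw [residual_eq, columnProj_fromCols_sub_mul]
    _ = columnProj X + columnProj (Y - columnProj X * Y) :=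
        columnProj_fromCols_of_conjTranspose_mul_eq_zero hX hE
          (conjTranspose_mul_sub_columnProj_mul hX Y)

theorem columnProj_submatrix_union [DecidableEq n] (A : Matrix m n R) {P Q : Finset n}
    (hPQ : Disjoint P Q) :
    columnProj (A.submatrix id ((↑) : ↥(P ∪ Q) → n)) =
      columnProj (fromCols (A.submatrix id ((↑) : P → n)) (A.submatrix id ((↑) : Q → n))) := by
  rw [← columnProj_submatrix_equiv _ (Equiv.Finset.union P Q hPQ)]
  congr 1
  ext i (j | j) <;> rfl

theorem stmt0_general [DecidableEq n] (A : Matrix m n R) {S P : Finset n} (hPS : P ⊆ S)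
    (hP : IsUnit ((A.submatrix id ((↑) : P → n))ᴴ * A.submatrix id ((↑) : P → n)))
    {E : Matrix m n R} (hE : E = A - columnProj (A.submatrix id ((↑) : P → n)) * A)
    (hR : IsUnit ((E.submatrix id ((↑) : ↥(S \ P) → n))ᴴ *
      E.submatrix id ((↑) : ↥(S \ P) → n))) :
    columnProj (A.submatrix id ((↑) : S → n)) =
      columnProj (A.submatrix id ((↑) : P → n)) +
        columnProj (E.submatrix id ((↑) : ↥(S \ P) → n)) := by
  have split := columnProj_submatrix_union A (Finset.disjoint_sdiff (s := P) (t := S))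
  rw [Finset.union_sdiff_of_subset hPS] at split
  subst hE
  exact split.trans (columnProj_fromCols hP hR)

end ColumnProj

theorem stmt0 {m n : ℕ} (A : Matrix (Fin m) (Fin n) ℝ) (S P : Finset (Fin n)) (hPS : P ⊆ S)
    (hS : IsUnit ((cols A S)ᵀ * cols A S)) (hP : IsUnit ((cols A P)ᵀ * cols A P))
    (E : Matrix (Fin m) (Fin n) ℝ) (hE : E = A - proj A P * A)
    (hR : IsUnit ((cols E (S \ P))ᵀ * cols E (S \ P))) :
    proj A S = proj A P + proj E (S \ P) :=
  -- Conjugation on `ℝ` is definitionally the identity, so `proj` unfolds to `columnProj`.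
  stmt0_general A hPS hP hE hR
end

section
/- Let A be a real m×n matrix, B a real m×r matrix, S a subset of column indices of A with A_{:S}ᵀA_{:S} invertible, and P a subset of S with R = S \ P and A_{:P}ᵀA_{:P} invertible. Let P^(S) and P^(P) be the projection matrices onto the spans of the columns of A indexed by S and P respectively, let E = A − P^(P)A and F = B − P^(P)B, assume E_{:R}ᵀE_{:R} is invertible, and let R^(R) = E_{:R}(E_{:R}ᵀE_{:R})⁻¹E_{:R}ᵀ. Then ‖B − P^(S)B‖_F² = ‖B − P^(P)B‖_F² − ‖R^(R)F‖_F². -/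
open Matrix

/-- The squared Frobenius norm `‖M‖_F² = tr(MᵀM)`. -/
noncomputable def frobSq {m r : ℕ} (M : Matrix (Fin m) (Fin r) ℝ) : ℝ :=
  Matrix.trace (Mᵀ * M)

/-!
Replacing the columns `Y` by their residuals `E = Y - colProj X * Y` is a unimodular change of
basis of the column span of `[X Y]`, and `Xᴴ * E = 0`, so the Gram matrix of `[X E]` is block
diagonal. Hence the projection onto the columns of `[X Y]` is `colProj X + colProj E`, with the two
summands mutually annihilating, and passing from `X` to `[X Y]` replaces the residual
`F = B - colProj X * B` by `F - colProj E * F`. Pythagoras for the projection `colProj E` concludes.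
-/

lemma conjTranspose_mul_self_sub_proj_mul {𝕜 m r : Type*} [NonUnitalRing 𝕜] [StarRing 𝕜]
    [Fintype m] {T : Matrix m m 𝕜} (hT : IsStarProjection T) (F : Matrix m r 𝕜) :
    (F - T * F)ᴴ * (F - T * F) = Fᴴ * F - (T * F)ᴴ * (T * F) := by
  have hT_star : Tᴴ = T := hT.isSelfAdjoint
  have hT_sq : T * T = T := hT.isIdempotentElem
  have h_proj_sq : (T * F)ᴴ * (T * F) = Fᴴ * (T * F) := by
    rw [conjTranspose_mul, hT_star, Matrix.mul_assoc, ← Matrix.mul_assoc T, hT_sq]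
  have h_cross : (T * F)ᴴ * F = Fᴴ * (T * F) := by
    rw [conjTranspose_mul, hT_star, Matrix.mul_assoc]
  rw [conjTranspose_sub, Matrix.sub_mul, Matrix.mul_sub, Matrix.mul_sub, h_proj_sq, h_cross,
    sub_self, sub_zero]

lemma conjTranspose_mul_eq_zero_comm {𝕜 m k l : Type*} [NonUnitalSemiring 𝕜] [StarRing 𝕜]
    [Fintype m] {X : Matrix m k 𝕜} {Y : Matrix m l 𝕜} : Xᴴ * Y = 0 ↔ Yᴴ * X = 0 := by
  rw [← conjTranspose_eq_zero, conjTranspose_mul, conjTranspose_conjTranspose]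

/-- The submatrix `A_{:S}` of `A` consisting of the columns indexed by `S`: the counterpart of
`cols` for arbitrary entries and arbitrary index types. -/
def colSubmatrix {𝕜 m n : Type*} (A : Matrix m n 𝕜) (S : Finset n) : Matrix m S 𝕜 :=
  A.submatrix id ((↑) : S → n)

lemma colSubmatrix_sub_mul {𝕜 m n : Type*} [NonUnitalNonAssocRing 𝕜] [Fintype m]
    (A : Matrix m n 𝕜) (M : Matrix m m 𝕜) (S : Finset n) :
    colSubmatrix (A - M * A) S = colSubmatrix A S - M * colSubmatrix A S :=
  rfl

section ColProj

variable {𝕜 m ι κ r n : Type*} [CommRing 𝕜] [StarRing 𝕜]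
  [Fintype m] [Fintype ι] [DecidableEq ι] [Fintype κ] [DecidableEq κ]

/-- The orthogonal projection `X (Xᴴ X)⁻¹ Xᴴ` onto the column span of `X`. It is meaningful only
when the Gram matrix `Xᴴ X` is invertible, since `⁻¹` is `0` on non-units. -/
noncomputable def colProj (X : Matrix m ι 𝕜) : Matrix m m 𝕜 :=
  X * (Xᴴ * X)⁻¹ * Xᴴ

lemma colProj_mul_self {X : Matrix m ι 𝕜} (hX : IsUnit (Xᴴ * X)) : colProj X * X = X := by
  rw [colProj, Matrix.mul_assoc, Matrix.mul_assoc,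
    nonsing_inv_mul _ ((isUnit_iff_isUnit_det _).1 hX), Matrix.mul_one]

lemma isHermitian_colProj (X : Matrix m ι 𝕜) : (colProj X).IsHermitian :=
  isHermitian_mul_mul_conjTranspose X (isHermitian_conjTranspose_mul_self X).inv

lemma isStarProjection_colProj {X : Matrix m ι 𝕜} (hX : IsUnit (Xᴴ * X)) :
    IsStarProjection (colProj X) where
  isIdempotentElem := by
    rw [IsIdempotentElem]
    nth_rewrite 2 [colProj]
    rw [← Matrix.mul_assoc, ← Matrix.mul_assoc, colProj_mul_self hX, colProj]
  isSelfAdjoint := isHermitian_colProj X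

lemma conjTranspose_mul_colProj {X : Matrix m ι 𝕜} (hX : IsUnit (Xᴴ * X)) :
    Xᴴ * colProj X = Xᴴ := by
  rw [← (isHermitian_colProj X).eq, ← conjTranspose_mul, colProj_mul_self hX]

lemma conjTranspose_mul_sub_colProj_mul {X : Matrix m ι 𝕜} (hX : IsUnit (Xᴴ * X))
    (Y : Matrix m r 𝕜) :
    Xᴴ * (Y - colProj X * Y) = 0 := by
  rw [Matrix.mul_sub, ← Matrix.mul_assoc, conjTranspose_mul_colProj hX, sub_self]

lemma colProj_mul_colProj_eq_zero {X : Matrix m ι 𝕜} {Y : Matrix m κ 𝕜} (hXY : Xᴴ * Y = 0) :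
    colProj X * colProj Y = 0 := by
  simp only [colProj, Matrix.mul_assoc, ← Matrix.mul_assoc Xᴴ Y, hXY, Matrix.zero_mul,
    Matrix.mul_zero]

lemma colProj_submatrix_equiv (X : Matrix m ι 𝕜) (e : κ ≃ ι) :
    colProj (X.submatrix id e) = colProj X := by
  simp only [colProj, conjTranspose_submatrix, submatrix_mul_equiv, inv_submatrix_equiv,
    ← submatrix_mul _ _ _ id _ Function.bijective_id, submatrix_id_id]

lemma colProj_mul_of_isUnit (X : Matrix m ι 𝕜) {U : Matrix ι ι 𝕜} (hU : IsUnit U) :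
    colProj (X * U) = colProj X := by
  have hU_det : IsUnit U.det := (isUnit_iff_isUnit_det U).1 hU
  have hU_star_det : IsUnit Uᴴ.det := (isUnit_iff_isUnit_det Uᴴ).1 hU.star
  have h_gram : (X * U)ᴴ * (X * U) = Uᴴ * (Xᴴ * X) * U := by
    simp only [conjTranspose_mul, Matrix.mul_assoc]
  calc colProj (X * U)
      = X * (U * (U⁻¹ * ((Xᴴ * X)⁻¹ * (Uᴴ⁻¹ * (Uᴴ * Xᴴ))))) := by
        rw [colProj, h_gram, Matrix.mul_inv_rev, Matrix.mul_inv_rev, conjTranspose_mul]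
        simp only [Matrix.mul_assoc]
    _ = colProj X := by
        rw [mul_nonsing_inv_cancel_left _ _ hU_det, nonsing_inv_mul_cancel_left _ _ hU_star_det,
          colProj, Matrix.mul_assoc]

lemma colProj_fromCols_of_orthogonal {X : Matrix m ι 𝕜} {Y : Matrix m κ 𝕜}
    (hX : IsUnit (Xᴴ * X)) (hY : IsUnit (Yᴴ * Y)) (hXY : Xᴴ * Y = 0) :
    colProj (fromCols X Y) = colProj X + colProj Y := by
  have hYX : Yᴴ * X = 0 := conjTranspose_mul_eq_zero_comm.1 hXY
  have h_gram_inv : ((fromCols X Y)ᴴ * fromCols X Y)⁻¹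
      = fromBlocks (Xᴴ * X)⁻¹ 0 0 (Yᴴ * Y)⁻¹ := by
    rw [conjTranspose_fromCols_eq_fromRows_conjTranspose, fromRows_mul_fromCols, hXY, hYX,
      inv_fromBlocks_zero₂₁_of_isUnit_iff _ _ _ (iff_of_true hX hY), Matrix.mul_zero,
      Matrix.zero_mul, neg_zero]
  rw [colProj, h_gram_inv, fromCols_mul_fromBlocks,
    conjTranspose_fromCols_eq_fromRows_conjTranspose, fromCols_mul_fromRows, Matrix.mul_zero,
    Matrix.mul_zero, add_zero, zero_add, colProj, colProj]

lemma colProj_fromCols {X : Matrix m ι 𝕜} {Y : Matrix m κ 𝕜} (hX : IsUnit (Xᴴ * X))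
    (hE : IsUnit ((Y - colProj X * Y)ᴴ * (Y - colProj X * Y))) :
    colProj (fromCols X Y) = colProj X + colProj (Y - colProj X * Y) := by
  set U : Matrix (ι ⊕ κ) (ι ⊕ κ) 𝕜 := fromBlocks 1 ((Xᴴ * X)⁻¹ * Xᴴ * Y) 0 1
  have hU : IsUnit U := isUnit_fromBlocks_zero₂₁.2 ⟨isUnit_one, isUnit_one⟩
  have h_basis_change : fromCols X Y = fromCols X (Y - colProj X * Y) * U := by
    rw [fromCols_mul_fromBlocks, Matrix.mul_one, Matrix.mul_zero, Matrix.mul_one, add_zero,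
      ← Matrix.mul_assoc, ← Matrix.mul_assoc, ← colProj, add_sub_cancel]
  rw [h_basis_change, colProj_mul_of_isUnit _ hU,
    colProj_fromCols_of_orthogonal hX hE (conjTranspose_mul_sub_colProj_mul hX Y)]

lemma sub_colProj_fromCols_mul {X : Matrix m ι 𝕜} {Y : Matrix m κ 𝕜} (hX : IsUnit (Xᴴ * X))
    (hE : IsUnit ((Y - colProj X * Y)ᴴ * (Y - colProj X * Y))) (B : Matrix m r 𝕜) :
    B - colProj (fromCols X Y) * B =
      (B - colProj X * B) - colProj (Y - colProj X * Y) * (B - colProj X * B) := by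
  have h_orth : (Y - colProj X * Y)ᴴ * X = 0 :=
    conjTranspose_mul_eq_zero_comm.1 (conjTranspose_mul_sub_colProj_mul hX Y)
  rw [colProj_fromCols hX hE, Matrix.mul_sub, ← Matrix.mul_assoc,
    colProj_mul_colProj_eq_zero h_orth, Matrix.zero_mul, sub_zero, Matrix.add_mul,
    sub_add_eq_sub_sub]

lemma colProj_colSubmatrix_eq_fromCols [DecidableEq n] (A : Matrix m n 𝕜) {S P : Finset n}
    (hPS : P ⊆ S) :
    colProj (colSubmatrix A S) =
      colProj (fromCols (colSubmatrix A P) (colSubmatrix A (S \ P))) := by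
  let e : P ⊕ ↥(S \ P) ≃ S := (Equiv.Finset.union P (S \ P) Finset.disjoint_sdiff).trans
    (Equiv.subtypeEquivRight fun j => by rw [Finset.union_sdiff_of_subset hPS])
  have h_reindex : (colSubmatrix A S).submatrix id e =
      fromCols (colSubmatrix A P) (colSubmatrix A (S \ P)) := by
    ext i (j | j) <;> rfl
  rw [← h_reindex, colProj_submatrix_equiv]

theorem stmt1_general [DecidableEq n] (A : Matrix m n 𝕜) (B : Matrix m r 𝕜) {S P : Finset n}
    (hPS : P ⊆ S) (hP : IsUnit ((colSubmatrix A P)ᴴ * colSubmatrix A P))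
    (E : Matrix m n 𝕜) (hE : E = A - colProj (colSubmatrix A P) * A)
    (F : Matrix m r 𝕜) (hF : F = B - colProj (colSubmatrix A P) * B)
    (hR : IsUnit ((colSubmatrix E (S \ P))ᴴ * colSubmatrix E (S \ P))) :
    (B - colProj (colSubmatrix A S) * B)ᴴ * (B - colProj (colSubmatrix A S) * B) =
      Fᴴ * F - (colProj (colSubmatrix E (S \ P)) * F)ᴴ *
        (colProj (colSubmatrix E (S \ P)) * F) := by
  have h_residual : B - colProj (colSubmatrix A S) * B =
      F - colProj (colSubmatrix E (S \ P)) * F := by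
    rw [hE, colSubmatrix_sub_mul] at hR ⊢
    rw [hF, colProj_colSubmatrix_eq_fromCols A hPS, sub_colProj_fromCols_mul hP hR]
  rw [h_residual, conjTranspose_mul_self_sub_proj_mul (isStarProjection_colProj hR)]

end ColProj

theorem stmt1 {m n r : ℕ} (A : Matrix (Fin m) (Fin n) ℝ) (B : Matrix (Fin m) (Fin r) ℝ)
    (S P : Finset (Fin n)) (hPS : P ⊆ S)
    (hS : IsUnit ((cols A S)ᵀ * cols A S)) (hP : IsUnit ((cols A P)ᵀ * cols A P))
    (E : Matrix (Fin m) (Fin n) ℝ) (hE : E = A - proj A P * A)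
    (F : Matrix (Fin m) (Fin r) ℝ) (hF : F = B - proj A P * B)
    (hR : IsUnit ((cols E (S \ P))ᵀ * cols E (S \ P))) :
    frobSq (B - proj A S * B) = frobSq (B - proj A P * B) - frobSq (proj E (S \ P) * F) := by
  -- The star of `ℝ` is the identity, so `ᴴ` and `colProj ∘ colSubmatrix` unfold to `ᵀ` and `proj`.
  have h_gram := stmt1_general A B hPS hP E hE F hF hR
  exact hF ▸ (congrArg trace h_gram).trans (trace_sub _ _)
end

section
/- Let E be a real m×n matrix, F a real m×r matrix, and p a column index of E with E_{:p}ᵀE_{:p} > 0. Set ω = EᵀE_{:p}/√(E_{:p}ᵀE_{:p}) ∈ ℝⁿ and υ = FᵀE_{:p}/√(E_{:p}ᵀE_{:p}) ∈ ℝʳ. Let R = E_{:p}(E_{:p}ᵀE_{:p})⁻¹E_{:p}ᵀ, and define the updated matrices E' = E − RE, F' = F − RF, H = FᵀE, H' = F'ᵀE', G = EᵀE, G' = E'ᵀE'. Then for every column index i: ‖H'_{:i}‖² = ‖H_{:i}‖² − 2ω_i⟨H_{:i}, υ⟩ + ‖υ‖²ω_i², and G'_{ii} = G_{ii} − ω_i².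 Equivalently, with f_i = ‖H_{:i}‖², g_i = G_{ii}, f'_i = ‖H'_{:i}‖², g'_i = G'_{ii}, the vectors satisfy f' = f − 2(ω ∘ Hᵀυ) + ‖υ‖²(ω ∘ ω) and g' = g − (ω ∘ ω), where ∘ is the Hadamard (entrywise) product. -/
open Matrix

/-!
With the unit vector `u = e / √(eᵀe)`, the matrix `R = u uᵀ` is a symmetric idempotent, and
`ω = Eᵀu`, `υ = Fᵀu`. Hence `(A - RA)ᵀ(B - RB) = AᵀB - AᵀRB`, and the term subtracted is the
rank-one matrix `(Aᵀu)(Bᵀu)ᵀ`. So `H' = H - υωᵀ` and `G' = G - ωωᵀ`: the first formula expands the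
squared norm of the column `H_{:i} - ω_i υ`, the second reads off the diagonal.
-/

section Projection

variable {m a b α : Type*}

theorem isSymm_vecMulVec_self [CommMagma α] (u : m → α) : (vecMulVec u u).IsSymm :=
  transpose_vecMulVec u u

theorem isIdempotentElem_vecMulVec_self [Fintype m] [Semiring α] {u : m → α} (hu : u ⬝ᵥ u = 1) :
    IsIdempotentElem (vecMulVec u u) := by
  rw [IsIdempotentElem, vecMulVec_mul_vecMulVec, hu, one_smul]

theorem transpose_sub_mul_mul_sub_mul [Fintype m] [NonUnitalCommRing α] {R : Matrix m m α}
    (hsymm : R.IsSymm) (hidem : IsIdempotentElem R) (A : Matrix m a α) (B : Matrix m b α) :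
    (A - R * A)ᵀ * (B - R * B) = Aᵀ * B - Aᵀ * R * B := by
  have hR : R * (B - R * B) = 0 := by
    rw [Matrix.mul_sub, ← Matrix.mul_assoc, hidem.eq, sub_self]
  rw [transpose_sub, transpose_mul, hsymm.eq, Matrix.sub_mul, Matrix.mul_assoc Aᵀ R, hR,
    Matrix.mul_zero, sub_zero, Matrix.mul_sub, Matrix.mul_assoc]

theorem transpose_sub_vecMulVec_mul_mul_sub_vecMulVec_mul [Fintype m] [CommRing α] {u : m → α}
    (hu : u ⬝ᵥ u = 1) (A : Matrix m a α) (B : Matrix m b α) :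
    (A - vecMulVec u u * A)ᵀ * (B - vecMulVec u u * B) =
      Aᵀ * B - vecMulVec (Aᵀ *ᵥ u) (Bᵀ *ᵥ u) := by
  rw [transpose_sub_mul_mul_sub_mul (isSymm_vecMulVec_self u) (isIdempotentElem_vecMulVec_self hu),
    mul_vecMulVec, vecMulVec_mul, mulVec_transpose B]

end Projection

section Normalization

variable {m n α K : Type*}

theorem vecMulVec_smul_smul [CommMonoid α] (c d : α) (v : m → α) (w : n → α) :
    vecMulVec (c • v) (d • w) = (c * d) • vecMulVec v w := by
  rw [smul_vecMulVec, vecMulVec_smul, smul_smul]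

theorem inv_smul_dotProduct_self_eq_one [Fintype m] [Field K] {e : m → K} {s : K}
    (hs : s * s = e ⬝ᵥ e) (he : e ⬝ᵥ e ≠ 0) : (s⁻¹ • e) ⬝ᵥ (s⁻¹ • e) = 1 := by
  rw [smul_dotProduct, dotProduct_smul, smul_smul, ← mul_inv, hs, smul_eq_mul, inv_mul_cancel₀ he]

end Normalization

section RankOneUpdate

variable {a b α : Type*} [CommRing α]

theorem col_sub_vecMulVec (M : Matrix a b α) (v : a → α) (w : b → α) (i : b) :
    (M - vecMulVec v w).col i = M.col i - w i • v := by
  ext k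
  simp only [col_apply, Matrix.sub_apply, vecMulVec_apply, Pi.sub_apply, Pi.smul_apply,
    smul_eq_mul, mul_comm]

theorem sub_smul_dotProduct_self [Fintype a] (v w : a → α) (c : α) :
    (v - c • w) ⬝ᵥ (v - c • w) = v ⬝ᵥ v - 2 * c * (v ⬝ᵥ w) + (w ⬝ᵥ w) * c ^ 2 := by
  simp only [sub_dotProduct, dotProduct_sub, smul_dotProduct, dotProduct_smul, smul_eq_mul,
    dotProduct_comm w v]
  ring

end RankOneUpdate

theorem stmt2_general {m n r K : Type*} [Fintype m] [Fintype r] [Field K]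
    {E : Matrix m n K} {F : Matrix m r K} {e : m → K} {s : K}
    (hs : s * s = e ⬝ᵥ e) (he : e ⬝ᵥ e ≠ 0)
    {ω : n → K} (hω : ω = s⁻¹ • (Eᵀ *ᵥ e))
    {υ : r → K} (hυ : υ = s⁻¹ • (Fᵀ *ᵥ e))
    {R : Matrix m m K} (hR : R = (e ⬝ᵥ e)⁻¹ • vecMulVec e e)
    {E' : Matrix m n K} (hE' : E' = E - R * E)
    {F' : Matrix m r K} (hF' : F' = F - R * F)
    {H H' : Matrix r n K} (hH : H = Fᵀ * E) (hH' : H' = F'ᵀ * E')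
    {G G' : Matrix n n K} (hG : G = Eᵀ * E) (hG' : G' = E'ᵀ * E') (i : n) :
    H'.col i ⬝ᵥ H'.col i =
        H.col i ⬝ᵥ H.col i - 2 * ω i * (H.col i ⬝ᵥ υ) + (υ ⬝ᵥ υ) * ω i ^ 2
      ∧ G' i i = G i i - ω i ^ 2 := by
  have hu := inv_smul_dotProduct_self_eq_one hs he
  rw [← hs, mul_inv, ← vecMulVec_smul_smul] at hR
  rw [← mulVec_smul] at hω hυ
  have hH_update : H' = H - vecMulVec υ ω := by
    rw [hH', hE', hF', hR, transpose_sub_vecMulVec_mul_mul_sub_vecMulVec_mul hu, hH, hυ, hω]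
  have hG_update : G' = G - vecMulVec ω ω := by
    rw [hG', hE', hR, transpose_sub_vecMulVec_mul_mul_sub_vecMulVec_mul hu, hG, hω]
  constructor
  · rw [hH_update, col_sub_vecMulVec, sub_smul_dotProduct_self]
  · rw [hG_update, Matrix.sub_apply, vecMulVec_apply, sq]

theorem stmt2 {m n r : ℕ} (E : Matrix (Fin m) (Fin n) ℝ) (F : Matrix (Fin m) (Fin r) ℝ)
    (p : Fin n) (e : Fin m → ℝ) (he : e = fun i => E i p)
    (hpos : 0 < e ⬝ᵥ e)
    (ω : Fin n → ℝ) (hω : ω = (Real.sqrt (e ⬝ᵥ e))⁻¹ • (Eᵀ *ᵥ e))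
    (υ : Fin r → ℝ) (hυ : υ = (Real.sqrt (e ⬝ᵥ e))⁻¹ • (Fᵀ *ᵥ e))
    (R : Matrix (Fin m) (Fin m) ℝ) (hR : R = (e ⬝ᵥ e)⁻¹ • vecMulVec e e)
    (E' : Matrix (Fin m) (Fin n) ℝ) (hE' : E' = E - R * E)
    (F' : Matrix (Fin m) (Fin r) ℝ) (hF' : F' = F - R * F)
    (H H' : Matrix (Fin r) (Fin n) ℝ) (hH : H = Fᵀ * E) (hH' : H' = F'ᵀ * E')
    (G G' : Matrix (Fin n) (Fin n) ℝ) (hG : G = Eᵀ * E) (hG' : G' = E'ᵀ * E') :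
    ∀ i : Fin n,
      ((fun k => H' k i) ⬝ᵥ fun k => H' k i) =
        ((fun k => H k i) ⬝ᵥ fun k => H k i) - 2 * ω i * ((fun k => H k i) ⬝ᵥ υ)
          + (υ ⬝ᵥ υ) * ω i ^ 2
      ∧ G' i i = G i i - ω i ^ 2 :=
  stmt2_general (Real.mul_self_sqrt hpos.le) hpos.ne' hω hυ hR hE' hF' hH hH' hG hG'
end

section
/- Let A be a real m×n matrix, B a real m×r matrix, and P, R subsets of the column indices of A with A_{:P}ᵀA_{:P} invertible. Let P^(P) = A_{:P}(A_{:P}ᵀA_{:P})⁻¹A_{:P}ᵀ, E = A − P^(P)A, and F = B − P^(P)B. Then E_{:R}ᵀB = E_{:R}ᵀF; consequently, if E_{:R}ᵀE_{:R} is invertible and R^(R) = E_{:R}(E_{:R}ᵀE_{:R})⁻¹E_{:R}ᵀ, then R^(R)B = R^(R)F. -/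
open Matrix

/-!
Since the projection `Q` is Hermitian and idempotent, `(Y - Q Y)ᴴ Q = Yᴴ (Q - Q²) = 0`, so a
residual `Y - Q Y` cannot distinguish `B` from `B - Q B`. Selecting columns commutes with left
multiplication, so the columns of the residual of `A` are the residual of the columns of `A`.
-/

section Residual

variable {α m k r : Type*} [NonUnitalRing α] [StarRing α] [Fintype m]

theorem conjTranspose_sub_mul_mul_eq_zero {Q : Matrix m m α} (hQ : IsStarProjection Q)
    (Y : Matrix m k α) : (Y - Q * Y)ᴴ * Q = 0 := by
  have hQ_star : Qᴴ = Q := hQ.isSelfAdjoint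
  rw [conjTranspose_sub, conjTranspose_mul, hQ_star, Matrix.sub_mul, Matrix.mul_assoc,
    hQ.isIdempotentElem.eq, sub_self]

theorem conjTranspose_sub_mul_mul_sub_mul {Q : Matrix m m α} (hQ : IsStarProjection Q)
    (Y : Matrix m k α) (B : Matrix m r α) :
    (Y - Q * Y)ᴴ * (B - Q * B) = (Y - Q * Y)ᴴ * B := by
  rw [Matrix.mul_sub, ← Matrix.mul_assoc, conjTranspose_sub_mul_mul_eq_zero hQ, Matrix.zero_mul,
    sub_zero]

end Residual

section ColumnSpan

variable {α m k p r : Type*} [CommRing α] [StarRing α] [Fintype m]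

/-- The orthogonal projection `X (Xᴴ X)⁻¹ Xᴴ` onto the column span of `X`. The conjugate transpose
makes one definition serve real and complex matrices alike. It is meant for `Xᴴ X` invertible;
otherwise Mathlib's convention `M⁻¹ = 0` for non-units makes it zero. -/
noncomputable def colSpanProj [Fintype k] [DecidableEq k] (X : Matrix m k α) : Matrix m m α :=
  X * (Xᴴ * X)⁻¹ * Xᴴ

theorem isStarProjection_colSpanProj [Fintype k] [DecidableEq k] {X : Matrix m k α}
    (hX : IsUnit (Xᴴ * X)) : IsStarProjection (colSpanProj X) where
  isIdempotentElem := calc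
    colSpanProj X * colSpanProj X
      = X * ((Xᴴ * X)⁻¹ * (Xᴴ * X)) * (Xᴴ * X)⁻¹ * Xᴴ := by
        simp only [colSpanProj, Matrix.mul_assoc]
    _ = colSpanProj X := by
        rw [nonsing_inv_mul _ ((isUnit_iff_isUnit_det _).1 hX), Matrix.mul_one, colSpanProj]
  isSelfAdjoint := isHermitian_mul_mul_conjTranspose X (isHermitian_conjTranspose_mul_self X).inv

theorem colSpanProj_mul_congr [Fintype k] [DecidableEq k] {X : Matrix m k α} {B F : Matrix m r α}
    (h : Xᴴ * B = Xᴴ * F) : colSpanProj X * B = colSpanProj X * F := by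
  simp only [colSpanProj, Matrix.mul_assoc, h]

theorem stmt6_general [Fintype k] [DecidableEq k] [Fintype p] [DecidableEq p]
    (X : Matrix m p α) (Y : Matrix m k α) (B : Matrix m r α) (hX : IsUnit (Xᴴ * X))
    (E : Matrix m k α) (hE : E = Y - colSpanProj X * Y)
    (F : Matrix m r α) (hF : F = B - colSpanProj X * B) :
    Eᴴ * B = Eᴴ * F ∧ (IsUnit (Eᴴ * E) → colSpanProj E * B = colSpanProj E * F) := by
  have hEF : Eᴴ * B = Eᴴ * F := by
    rw [hE, hF, conjTranspose_sub_mul_mul_sub_mul (isStarProjection_colSpanProj hX)]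
  exact ⟨hEF, fun _ ↦ colSpanProj_mul_congr hEF⟩

end ColumnSpan

theorem proj_eq_colSpanProj {m n : ℕ} (A : Matrix (Fin m) (Fin n) ℝ) (S : Finset (Fin n)) :
    proj A S = colSpanProj (cols A S) := by
  simp only [proj, colSpanProj, conjTranspose_eq_transpose_of_trivial]

theorem cols_sub_mul {m n : ℕ} (Q : Matrix (Fin m) (Fin m) ℝ) (A : Matrix (Fin m) (Fin n) ℝ)
    (S : Finset (Fin n)) : cols (A - Q * A) S = cols A S - Q * cols A S :=
  rfl

theorem stmt6 {m n r : ℕ} (A : Matrix (Fin m) (Fin n) ℝ) (B : Matrix (Fin m) (Fin r) ℝ)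
    (P R : Finset (Fin n)) (hP : IsUnit ((cols A P)ᵀ * cols A P))
    (E : Matrix (Fin m) (Fin n) ℝ) (hE : E = A - proj A P * A)
    (F : Matrix (Fin m) (Fin r) ℝ) (hF : F = B - proj A P * B) :
    (cols E R)ᵀ * B = (cols E R)ᵀ * F ∧
      (IsUnit ((cols E R)ᵀ * cols E R) → proj E R * B = proj E R * F) := by
  simp only [proj_eq_colSpanProj, ← conjTranspose_eq_transpose_of_trivial] at hP hE hF ⊢
  exact stmt6_general (cols A P) (cols A R) B hP (cols E R) (hE ▸ cols_sub_mul _ A R) F hF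
end

section
/- Let A be a real m×n matrix, B a real m×r matrix, S a subset of column indices of A with A_{:S}ᵀA_{:S} invertible, and i a column index not in S such that A_{:S∪{i}}ᵀA_{:S∪{i}} is invertible. Let P^(S) be the projection matrix onto the span of the columns of A indexed by S, E = A − P^(S)A, and F = B − P^(S)B. Then E_{:i}ᵀE_{:i} > 0 and ‖B − P^(S∪{i})B‖_F² = ‖B − P^(S)B‖_F² − ‖FᵀE_{:i}‖²/(E_{:i}ᵀE_{:i}). In particular, minimizing the residual ‖B − P^(S∪{i})B‖_F² over candidate columns i is equivalent to maximizing ‖FᵀE_{:i}‖²/(E_{:i}ᵀE_{:i}). -/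
open Matrix

/-!
Let `P` be the orthogonal projection onto a subspace `W`, let `a` be a vector, and let
`e = a - P a` be its residual. Then `e` is orthogonal to `W` and `W ⊔ ⟨a⟩ = W ⊔ ⟨e⟩`, so the
orthogonal projection onto `W ⊔ ⟨a⟩` is the rank-one update `P + (eᵀe)⁻¹ e eᵀ`. Hence adjoining `a`
replaces the residual `F = B - P B` by `F - (eᵀe)⁻¹ e (Fᵀe)ᵀ`, and expanding the square of the
Frobenius norm gives the decrease `‖Fᵀe‖² / eᵀe`. If the columns indexed by `S ∪ {i}` are linearly
independent, then `A_{:i}` lies outside the span `W` of those indexed by `S`, so `e ≠ 0`.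
-/

/-- The matrix `P` represents the orthogonal projection onto the subspace `W`, with respect to the
bilinear form `⬝ᵥ`. The condition `P * P = P` is not a field, because it follows from `mulVec_mem`
and `mulVec_eq_self`. -/
structure IsOrthogonalProjectionMatrix {R m : Type*} [CommRing R] [Fintype m]
    (P : Matrix m m R) (W : Submodule R (m → R)) : Prop where
  isSymm : P.IsSymm
  mulVec_mem : ∀ v, P *ᵥ v ∈ W
  mulVec_eq_self : ∀ w ∈ W, P *ᵥ w = w

namespace IsOrthogonalProjectionMatrix

section CommRing

variable {R m : Type*} [CommRing R] [Fintype m] {P Q : Matrix m m R} {W : Submodule R (m → R)}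

theorem mul_eq_right_of_mulVec_mem (hP : IsOrthogonalProjectionMatrix P W)
    (hQ : ∀ v, Q *ᵥ v ∈ W) : P * Q = Q :=
  ext_iff_mulVec.2 fun v => by rw [← mulVec_mulVec, hP.mulVec_eq_self _ (hQ v)]

theorem unique (hP : IsOrthogonalProjectionMatrix P W) (hQ : IsOrthogonalProjectionMatrix Q W) :
    P = Q :=
  calc
    P = Pᵀ := hP.isSymm.eq.symm
    _ = (Q * P)ᵀ := by rw [hQ.mul_eq_right_of_mulVec_mem hP.mulVec_mem]
    _ = P * Q := by rw [transpose_mul, hP.isSymm.eq, hQ.isSymm.eq]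
    _ = Q := hP.mul_eq_right_of_mulVec_mem hQ.mulVec_mem

theorem mulVec_residual_eq_zero (hP : IsOrthogonalProjectionMatrix P W) (a : m → R) :
    P *ᵥ (a - P *ᵥ a) = 0 := by
  rw [mulVec_sub, hP.mulVec_eq_self _ (hP.mulVec_mem a), sub_self]

theorem residual_dotProduct_eq_zero (hP : IsOrthogonalProjectionMatrix P W) (a : m → R)
    {w : m → R} (hw : w ∈ W) : (a - P *ᵥ a) ⬝ᵥ w = 0 := by
  rw [← hP.mulVec_eq_self w hw, dotProduct_mulVec, ← mulVec_transpose, hP.isSymm.eq,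
    hP.mulVec_residual_eq_zero, zero_dotProduct]

theorem residual_dotProduct_self (hP : IsOrthogonalProjectionMatrix P W) (a : m → R) :
    (a - P *ᵥ a) ⬝ᵥ (a - P *ᵥ a) = (a - P *ᵥ a) ⬝ᵥ a := by
  rw [dotProduct_sub, hP.residual_dotProduct_eq_zero a (hP.mulVec_mem a), sub_zero]

theorem residual_ne_zero (hP : IsOrthogonalProjectionMatrix P W) {a : m → R} (ha : a ∉ W) :
    a - P *ᵥ a ≠ 0 :=
  fun h => ha (sub_eq_zero.1 h ▸ hP.mulVec_mem a)

theorem transpose_residual_mulVec_residual {r : Type*} (hP : IsOrthogonalProjectionMatrix P W)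
    (B : Matrix m r R) (a : m → R) :
    (B - P * B)ᵀ *ᵥ (a - P *ᵥ a) = Bᵀ *ᵥ (a - P *ᵥ a) := by
  rw [transpose_sub, transpose_mul, hP.isSymm.eq, sub_mulVec, ← mulVec_mulVec,
    hP.mulVec_residual_eq_zero, mulVec_zero, sub_zero]

end CommRing

section Field

variable {K m : Type*} [Field K] [Fintype m] {P Q : Matrix m m K} {W : Submodule K (m → K)}
  {a e : m → K}

theorem add_vecMulVec_residual (hP : IsOrthogonalProjectionMatrix P W) (he : e = a - P *ᵥ a)
    (he₀ : e ⬝ᵥ e ≠ 0) :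
    IsOrthogonalProjectionMatrix (P + (e ⬝ᵥ e)⁻¹ • vecMulVec e e) (W ⊔ K ∙ a) := by
  have update_mulVec (v : m → K) :
      (P + (e ⬝ᵥ e)⁻¹ • vecMulVec e e) *ᵥ v = P *ᵥ v + ((e ⬝ᵥ e)⁻¹ * (e ⬝ᵥ v)) • e := by
    rw [add_mulVec, smul_mulVec, vecMulVec_mulVec, op_smul_eq_smul, smul_smul]
  have W_le : W ≤ W ⊔ K ∙ a := le_sup_left
  have a_mem : a ∈ W ⊔ K ∙ a := Submodule.mem_sup_right (Submodule.mem_span_singleton_self a)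
  have e_mem : e ∈ W ⊔ K ∙ a := he ▸ sub_mem a_mem (W_le (hP.mulVec_mem a))
  refine ⟨?_, fun v => ?_, fun v hv => ?_⟩
  · exact hP.isSymm.add (IsSymm.smul (transpose_vecMulVec e e) _)
  · rw [update_mulVec]
    exact add_mem (W_le (hP.mulVec_mem v)) (Submodule.smul_mem _ _ e_mem)
  · obtain ⟨w, hw, _, ha, rfl⟩ := Submodule.mem_sup.1 hv
    obtain ⟨c, rfl⟩ := Submodule.mem_span_singleton.1 ha
    have fixes_w : (P + (e ⬝ᵥ e)⁻¹ • vecMulVec e e) *ᵥ w = w := by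
      have e_orth : e ⬝ᵥ w = 0 := he ▸ hP.residual_dotProduct_eq_zero a hw
      rw [update_mulVec, hP.mulVec_eq_self w hw, e_orth, mul_zero, zero_smul, add_zero]
    have fixes_a : (P + (e ⬝ᵥ e)⁻¹ • vecMulVec e e) *ᵥ a = a := by
      have e_dot_a : e ⬝ᵥ a = e ⬝ᵥ e := he ▸ (hP.residual_dotProduct_self a).symm
      rw [update_mulVec, e_dot_a, inv_mul_cancel₀ he₀, one_smul, he, add_sub_cancel]
    rw [mulVec_add, mulVec_smul, fixes_w, fixes_a]

theorem residual_sup_span_singleton {r : Type*} (hP : IsOrthogonalProjectionMatrix P W)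
    (hQ : IsOrthogonalProjectionMatrix Q (W ⊔ K ∙ a)) (he : e = a - P *ᵥ a) (he₀ : e ⬝ᵥ e ≠ 0)
    (B : Matrix m r K) :
    B - Q * B = (B - P * B) - (e ⬝ᵥ e)⁻¹ • vecMulVec e ((B - P * B)ᵀ *ᵥ e) := by
  have coeff : (B - P * B)ᵀ *ᵥ e = e ᵥ* B := by
    rw [he, hP.transpose_residual_mulVec_residual, mulVec_transpose]
  rw [hQ.unique (hP.add_vecMulVec_residual he he₀), coeff, Matrix.add_mul, smul_mul,
    vecMulVec_mul, sub_add_eq_sub_sub]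

end Field

end IsOrthogonalProjectionMatrix

theorem isOrthogonalProjectionMatrix_mul_inv_gram_mul_transpose {R m k : Type*} [CommRing R]
    [Fintype m] [Fintype k] [DecidableEq k] (C : Matrix m k R) (hC : IsUnit (Cᵀ * C)) :
    IsOrthogonalProjectionMatrix (C * (Cᵀ * C)⁻¹ * Cᵀ) (Submodule.span R (Set.range C.col)) := by
  rw [← range_mulVecLin]
  refine ⟨?_, fun v => ⟨((Cᵀ * C)⁻¹ * Cᵀ) *ᵥ v, ?_⟩, ?_⟩
  · rw [IsSymm, transpose_mul, transpose_mul, transpose_nonsing_inv, transpose_mul,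
      transpose_transpose, Matrix.mul_assoc]
  · rw [mulVecLin_apply, mulVec_mulVec, Matrix.mul_assoc]
  · rintro _ ⟨x, rfl⟩
    have fixes_C : C * (Cᵀ * C)⁻¹ * Cᵀ * C = C := by
      rw [Matrix.mul_assoc, Matrix.mul_assoc,
        nonsing_inv_mul _ ((isUnit_iff_isUnit_det _).1 hC), Matrix.mul_one]
    rw [mulVecLin_apply, mulVec_mulVec, fixes_C]

theorem linearIndependent_col_of_isUnit_transpose_mul_self {R m k : Type*} [CommRing R]
    [Fintype m] [Fintype k] [DecidableEq k] {C : Matrix m k R} (hC : IsUnit (Cᵀ * C)) :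
    LinearIndependent R C.col := by
  refine mulVec_injective_iff.1 (Function.Injective.of_comp (f := Cᵀ.mulVec) ?_)
  simpa only [Function.comp_def, mulVec_mulVec] using mulVec_injective_of_isUnit hC

theorem trace_transpose_mul_self_sub_vecMulVec {K m r : Type*} [Field K] [Fintype m] [Fintype r]
    (M : Matrix m r K) (v : m → K) (hv : v ⬝ᵥ v ≠ 0) :
    trace ((M - (v ⬝ᵥ v)⁻¹ • vecMulVec v (Mᵀ *ᵥ v))ᵀ *
        (M - (v ⬝ᵥ v)⁻¹ • vecMulVec v (Mᵀ *ᵥ v))) =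
      trace (Mᵀ * M) - ((Mᵀ *ᵥ v) ⬝ᵥ (Mᵀ *ᵥ v)) / (v ⬝ᵥ v) := by
  set u := Mᵀ *ᵥ v with hu
  have cross_right : trace (Mᵀ * vecMulVec v u) = u ⬝ᵥ u := by
    rw [mul_vecMulVec, ← hu, trace_vecMulVec]
  have cross_left : trace (vecMulVec u v * M) = u ⬝ᵥ u := by
    rw [vecMulVec_mul, ← mulVec_transpose, ← hu, trace_vecMulVec]
  have square : trace (vecMulVec u v * vecMulVec v u) = (v ⬝ᵥ v) * (u ⬝ᵥ u) := by
    rw [vecMulVec_mul_vecMulVec, trace_vecMulVec, dotProduct_smul, smul_eq_mul]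
  simp only [transpose_sub, transpose_smul, transpose_vecMulVec, Matrix.sub_mul, Matrix.mul_sub,
    smul_mul, Matrix.mul_smul, trace_sub, trace_smul, smul_eq_mul, cross_right, cross_left, square]
  field_simp
  ring

section Columns

variable {m n : ℕ} {A : Matrix (Fin m) (Fin n) ℝ} {S : Finset (Fin n)} {i : Fin n}

theorem range_col_cols : Set.range (cols A S).col = A.col '' S :=
  (Set.image_eq_range A.col S).symm

theorem isOrthogonalProjectionMatrix_proj (hS : IsUnit ((cols A S)ᵀ * cols A S)) :
    IsOrthogonalProjectionMatrix (proj A S) (Submodule.span ℝ (A.col '' S)) :=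
  range_col_cols (A := A) (S := S) ▸ isOrthogonalProjectionMatrix_mul_inv_gram_mul_transpose _ hS

theorem isOrthogonalProjectionMatrix_proj_insert
    (hSi : IsUnit ((cols A (insert i S))ᵀ * cols A (insert i S))) :
    IsOrthogonalProjectionMatrix (proj A (insert i S))
      (Submodule.span ℝ (A.col '' S) ⊔ ℝ ∙ A.col i) := by
  have h := isOrthogonalProjectionMatrix_proj hSi
  rwa [Finset.coe_insert, Set.image_insert_eq, Submodule.span_insert, sup_comm] at h

theorem col_notMem_span_of_isUnit_gram_insert (hi : i ∉ S)
    (hSi : IsUnit ((cols A (insert i S))ᵀ * cols A (insert i S))) :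
    A.col i ∉ Submodule.span ℝ (A.col '' S) := by
  have indep : LinearIndepOn ℝ A.col ↑(insert i S) :=
    linearIndependent_col_of_isUnit_transpose_mul_self hSi
  rw [Finset.coe_insert] at indep
  exact ((linearIndepOn_insert (Finset.mem_coe.not.2 hi)).1 indep).2

end Columns

theorem stmt9_general {K m r : Type*} [Field K] [LinearOrder K] [IsStrictOrderedRing K]
    [Fintype m] [Fintype r] {P Q : Matrix m m K} {W : Submodule K (m → K)} {a e : m → K}
    (hP : IsOrthogonalProjectionMatrix P W) (hQ : IsOrthogonalProjectionMatrix Q (W ⊔ K ∙ a))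
    (ha : a ∉ W) (he : e = a - P *ᵥ a) (B : Matrix m r K) :
    0 < e ⬝ᵥ e ∧
      trace ((B - Q * B)ᵀ * (B - Q * B)) =
        trace ((B - P * B)ᵀ * (B - P * B)) -
          (((B - P * B)ᵀ *ᵥ e) ⬝ᵥ ((B - P * B)ᵀ *ᵥ e)) / (e ⬝ᵥ e) := by
  have e_ne_zero : e ≠ 0 := he ▸ hP.residual_ne_zero ha
  have norm_ne_zero : e ⬝ᵥ e ≠ 0 := dotProduct_self_eq_zero.not.2 e_ne_zero
  have norm_nonneg : 0 ≤ e ⬝ᵥ e := Finset.sum_nonneg fun k _ => mul_self_nonneg (e k)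
  refine ⟨norm_nonneg.lt_of_ne' norm_ne_zero, ?_⟩
  rw [hP.residual_sup_span_singleton hQ he norm_ne_zero,
    trace_transpose_mul_self_sub_vecMulVec _ _ norm_ne_zero]

theorem stmt9 {m n r : ℕ} (A : Matrix (Fin m) (Fin n) ℝ) (B : Matrix (Fin m) (Fin r) ℝ)
    (S : Finset (Fin n)) (i : Fin n) (hi : i ∉ S)
    (hS : IsUnit ((cols A S)ᵀ * cols A S))
    (hSi : IsUnit ((cols A (insert i S))ᵀ * cols A (insert i S)))
    (E : Matrix (Fin m) (Fin n) ℝ) (hE : E = A - proj A S * A)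
    (F : Matrix (Fin m) (Fin r) ℝ) (hF : F = B - proj A S * B)
    (e : Fin m → ℝ) (he : e = fun k => E k i) :
    0 < e ⬝ᵥ e ∧
      frobSq (B - proj A (insert i S) * B) =
        frobSq (B - proj A S * B) - ((Fᵀ *ᵥ e) ⬝ᵥ (Fᵀ *ᵥ e)) / (e ⬝ᵥ e) := by
  subst hE hF
  exact stmt9_general (isOrthogonalProjectionMatrix_proj hS)
    (isOrthogonalProjectionMatrix_proj_insert hSi)
    (col_notMem_span_of_isUnit_gram_insert hi hSi) he B
end

section
/- Let E be a real m×n matrix, F a real m×r matrix, and p a column index of E with E_{:p}ᵀE_{:p} > 0. Set ω = EᵀE_{:p}/√(E_{:p}ᵀE_{:p}) ∈ ℝⁿ and υ = FᵀE_{:p}/√(E_{:p}ᵀE_{:p}) ∈ ℝʳ, and let R = E_{:p}(E_{:p}ᵀE_{:p})⁻¹E_{:p}ᵀ. Then (F − RF)ᵀ(E − RE) = FᵀE − υωᵀ; that is, the updated matrix H' = F'ᵀE' of inner products between the residual target and source columns is obtained from H = FᵀE by a rank-one update H' = H − υωᵀ. -/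
open Matrix

/-!
Since `R` is symmetric and idempotent, `(1 - R)ᵀ * (1 - R) = 1 - R`, so deflating both factors
changes `Fᵀ * E` only by `Fᵀ * R * E`. As `R` is a multiple of `vecMulVec e e`, this is an outer
product; dividing each of its two vectors by a square root of `e ⬝ᵥ e` absorbs the scalar.
-/

section Deflation

variable {m n r A : Type*} [Fintype m] [CommRing A]

theorem mul_sub_mul_eq_zero_of_isIdempotentElem {P : Matrix m m A}
    (hP : IsIdempotentElem P) (E : Matrix m n A) : P * (E - P * E) = 0 := by
  rw [Matrix.mul_sub, ← Matrix.mul_assoc, hP.eq, sub_self]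

theorem transpose_sub_mul_sub_of_isSymm_of_isIdempotentElem {P : Matrix m m A} (hsymm : P.IsSymm)
    (hidem : IsIdempotentElem P) (E : Matrix m n A) (F : Matrix m r A) :
    (F - P * F)ᵀ * (E - P * E) = Fᵀ * E - Fᵀ * (P * E) :=
  calc (F - P * F)ᵀ * (E - P * E)
      = Fᵀ * (E - P * E) - Fᵀ * (P * (E - P * E)) := by
        rw [transpose_sub, transpose_mul, hsymm.eq, Matrix.sub_mul, Matrix.mul_assoc]
    _ = Fᵀ * E - Fᵀ * (P * E) := by
        rw [mul_sub_mul_eq_zero_of_isIdempotentElem hidem, Matrix.mul_zero, sub_zero,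
          Matrix.mul_sub]

end Deflation

section LineProjection

variable {m n r K : Type*} [Field K]

theorem vecMulVec_inv_smul_inv_smul (s : K) (u : r → K) (v : n → K) :
    vecMulVec (s⁻¹ • u) (s⁻¹ • v) = (s * s)⁻¹ • vecMulVec u v := by
  rw [smul_vecMulVec, vecMulVec_smul, smul_smul, mul_inv]

variable [Fintype m]

/-- The matrix of the orthogonal projection, for the bilinear form `⬝ᵥ`, onto the line spanned
by `e`. It is the zero matrix when `e ⬝ᵥ e = 0`. -/
def lineProjection (e : m → K) : Matrix m m K :=
  (e ⬝ᵥ e)⁻¹ • vecMulVec e e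

theorem isSymm_lineProjection (e : m → K) : (lineProjection e).IsSymm := by
  rw [IsSymm, lineProjection, transpose_smul, transpose_vecMulVec]

theorem isIdempotentElem_lineProjection {e : m → K} (he : e ⬝ᵥ e ≠ 0) :
    IsIdempotentElem (lineProjection e) := by
  rw [IsIdempotentElem, lineProjection, smul_mul_smul_comm, vecMulVec_mul_vecMulVec,
    vecMulVec_smul, smul_smul, mul_assoc, inv_mul_cancel₀ he, mul_one]

theorem transpose_mul_lineProjection_mul (E : Matrix m n K) (F : Matrix m r K) (e : m → K) :
    Fᵀ * (lineProjection e * E) = (e ⬝ᵥ e)⁻¹ • vecMulVec (Fᵀ *ᵥ e) (Eᵀ *ᵥ e) := by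
  rw [lineProjection, Matrix.smul_mul, Matrix.mul_smul, vecMulVec_mul, mul_vecMulVec,
    mulVec_transpose E]

theorem stmt11_general (E : Matrix m n K) (F : Matrix m r K) (e : m → K)
    (s : K) (hs : s * s = e ⬝ᵥ e) (hs_ne_zero : s ≠ 0)
    (ω : n → K) (hω : ω = s⁻¹ • (Eᵀ *ᵥ e)) (υ : r → K) (hυ : υ = s⁻¹ • (Fᵀ *ᵥ e))
    (R : Matrix m m K) (hR : R = (e ⬝ᵥ e)⁻¹ • vecMulVec e e) :
    (F - R * F)ᵀ * (E - R * E) = Fᵀ * E - vecMulVec υ ω := by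
  have he : e ⬝ᵥ e ≠ 0 := hs ▸ mul_ne_zero hs_ne_zero hs_ne_zero
  have hRproj : R = lineProjection e := hR
  have hupdate : Fᵀ * (R * E) = vecMulVec υ ω := by
    rw [hRproj, transpose_mul_lineProjection_mul, hυ, hω, vecMulVec_inv_smul_inv_smul, hs]
  rw [← hupdate, hRproj]
  exact transpose_sub_mul_sub_of_isSymm_of_isIdempotentElem (isSymm_lineProjection e)
    (isIdempotentElem_lineProjection he) E F

end LineProjection

theorem stmt11 {m n r : ℕ} (E : Matrix (Fin m) (Fin n) ℝ) (F : Matrix (Fin m) (Fin r) ℝ)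
    (p : Fin n) (e : Fin m → ℝ) (he : e = fun i => E i p) (hpos : 0 < e ⬝ᵥ e)
    (ω : Fin n → ℝ) (hω : ω = (Real.sqrt (e ⬝ᵥ e))⁻¹ • (Eᵀ *ᵥ e))
    (υ : Fin r → ℝ) (hυ : υ = (Real.sqrt (e ⬝ᵥ e))⁻¹ • (Fᵀ *ᵥ e))
    (R : Matrix (Fin m) (Fin m) ℝ) (hR : R = (e ⬝ᵥ e)⁻¹ • vecMulVec e e) :
    (F - R * F)ᵀ * (E - R * E) = Fᵀ * E - vecMulVec υ ω :=
  stmt11_general E F e _ (Real.mul_self_sqrt hpos.le) (Real.sqrt_pos.mpr hpos).ne' ω hω υ hυ R hR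
end

section
/- Let E be a real m×n matrix and p a column index of E with E_{:p}ᵀE_{:p} > 0. Set ω = EᵀE_{:p}/√(E_{:p}ᵀE_{:p}) ∈ ℝⁿ and let R = E_{:p}(E_{:p}ᵀE_{:p})⁻¹E_{:p}ᵀ. Then (E − RE)ᵀ(E − RE) = EᵀE − ωωᵀ; that is, the Gram matrix G' = E'ᵀE' of the updated residual E' = E − RE is obtained from G = EᵀE by the rank-one update G' = G − ωωᵀ. -/
open Matrix

theorem vecMulVec_smul_star_smul {κ 𝕜 : Type*} [CommMonoid 𝕜] [StarMul 𝕜]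
    (c : 𝕜) (v : κ → 𝕜) :
    vecMulVec (c • v) (star (c • v)) = (star c * c) • vecMulVec v (star v) := by
  rw [star_smul, smul_vecMulVec, vecMulVec_smul, smul_smul, mul_comm]

section

variable {ι κ 𝕜 : Type*} [Fintype ι]

theorem conjTranspose_sub_mul_self_of_isStarProjection [Ring 𝕜] [StarRing 𝕜]
    {P : Matrix ι ι 𝕜} (hP : IsStarProjection P) (E : Matrix ι κ 𝕜) :
    (E - P * E)ᴴ * (E - P * E) = Eᴴ * E - Eᴴ * (P * E) := by
  classical
  have hQ : IsStarProjection (1 - P) := hP.one_sub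
  calc (E - P * E)ᴴ * (E - P * E)
      = ((1 - P) * E)ᴴ * ((1 - P) * E) := by rw [Matrix.sub_mul, Matrix.one_mul]
    _ = Eᴴ * ((star (1 - P) * (1 - P)) * E) := by
      rw [conjTranspose_mul, star_eq_conjTranspose, Matrix.mul_assoc, Matrix.mul_assoc]
    _ = Eᴴ * ((1 - P) * E) := by
      rw [hQ.isSelfAdjoint.star_eq, hQ.isIdempotentElem.eq]
    _ = Eᴴ * E - Eᴴ * (P * E) := by rw [Matrix.sub_mul, Matrix.one_mul, Matrix.mul_sub]

variable [Field 𝕜] [StarRing 𝕜]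

/-- The matrix `e (eᴴ e)⁻¹ eᴴ` of the orthogonal projection onto the span of the vector `e`.
It is `0` if `eᴴ e = 0`. -/
def spanProj (e : ι → 𝕜) : Matrix ι ι 𝕜 :=
  (star e ⬝ᵥ e)⁻¹ • vecMulVec e (star e)

theorem isSelfAdjoint_spanProj (e : ι → 𝕜) : IsSelfAdjoint (spanProj e) := by
  have hd : star (star e ⬝ᵥ e) = star e ⬝ᵥ e := (star_dotProduct e e).symm
  rw [isSelfAdjoint_iff, spanProj, star_smul, star_inv₀, hd, star_eq_conjTranspose,
    conjTranspose_vecMulVec, star_star]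

theorem isIdempotentElem_spanProj {e : ι → 𝕜} (he : star e ⬝ᵥ e ≠ 0) :
    IsIdempotentElem (spanProj e) := by
  rw [IsIdempotentElem, spanProj, smul_mul_smul_comm, vecMulVec_mul_vecMulVec, vecMulVec_smul,
    smul_smul, inv_mul_cancel_right₀ he]

theorem isStarProjection_spanProj {e : ι → 𝕜} (he : star e ⬝ᵥ e ≠ 0) :
    IsStarProjection (spanProj e) :=
  ⟨isIdempotentElem_spanProj he, isSelfAdjoint_spanProj e⟩

theorem conjTranspose_mul_spanProj_mul (E : Matrix ι κ 𝕜) (e : ι → 𝕜) :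
    Eᴴ * (spanProj e * E) =
      (star e ⬝ᵥ e)⁻¹ • vecMulVec (Eᴴ *ᵥ e) (star (Eᴴ *ᵥ e)) := by
  rw [spanProj, Matrix.smul_mul, Matrix.mul_smul, vecMulVec_mul, mul_vecMulVec, star_mulVec,
    conjTranspose_conjTranspose]

theorem stmt12_general (E : Matrix ι κ 𝕜) (e : ι → 𝕜) (he : star e ⬝ᵥ e ≠ 0)
    (s : 𝕜) (hs : star s * s = star e ⬝ᵥ e) (ω : κ → 𝕜) (hω : ω = s⁻¹ • (Eᴴ *ᵥ e)) :
    (E - spanProj e * E)ᴴ * (E - spanProj e * E) = Eᴴ * E - vecMulVec ω (star ω) := by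
  have hωω : vecMulVec ω (star ω) = Eᴴ * (spanProj e * E) := by
    rw [hω, vecMulVec_smul_star_smul, conjTranspose_mul_spanProj_mul, star_inv₀, ← mul_inv, hs]
  rw [conjTranspose_sub_mul_self_of_isStarProjection (isStarProjection_spanProj he), hωω]

end

theorem stmt12 {m n : ℕ} (E : Matrix (Fin m) (Fin n) ℝ)
    (p : Fin n) (e : Fin m → ℝ) (he : e = fun i => E i p) (hpos : 0 < e ⬝ᵥ e)
    (ω : Fin n → ℝ) (hω : ω = (Real.sqrt (e ⬝ᵥ e))⁻¹ • (Eᵀ *ᵥ e))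
    (R : Matrix (Fin m) (Fin m) ℝ) (hR : R = (e ⬝ᵥ e)⁻¹ • vecMulVec e e) :
    (E - R * E)ᵀ * (E - R * E) = Eᵀ * E - vecMulVec ω ω := by
  subst hR
  -- `star` on `ℝ` is definitionally the identity, so `ᴴ` and `star e` unfold to `ᵀ` and `e`.
  exact stmt12_general E e hpos.ne' √(e ⬝ᵥ e) (Real.mul_self_sqrt hpos.le) ω hω
end

section
/- Let A be a real m×n matrix and B a real m×r matrix. Define sequences of residual matrices by E⁽⁰⁾ = A, F⁽⁰⁾ = B, and for t = 1, …, l: given a selected column index p_t with (E⁽ᵗ⁻¹⁾_{:p_t})ᵀE⁽ᵗ⁻¹⁾_{:p_t} > 0, set ω⁽ᵗ⁾ = (E⁽ᵗ⁻¹⁾)ᵀE⁽ᵗ⁻¹⁾_{:p_t}/√((E⁽ᵗ⁻¹⁾_{:p_t})ᵀE⁽ᵗ⁻¹⁾_{:p_t}), υ⁽ᵗ⁾ = (F⁽ᵗ⁻¹⁾)ᵀE⁽ᵗ⁻¹⁾_{:p_t}/√((E⁽ᵗ⁻¹⁾_{:p_t})ᵀE⁽ᵗ⁻¹⁾_{:p_t}),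 R⁽ᵗ⁾ = E⁽ᵗ⁻¹⁾_{:p_t}((E⁽ᵗ⁻¹⁾_{:p_t})ᵀE⁽ᵗ⁻¹⁾_{:p_t})⁻¹(E⁽ᵗ⁻¹⁾_{:p_t})ᵀ, E⁽ᵗ⁾ = E⁽ᵗ⁻¹⁾ − R⁽ᵗ⁾E⁽ᵗ⁻¹⁾, and F⁽ᵗ⁾ = F⁽ᵗ⁻¹⁾ − R⁽ᵗ⁾F⁽ᵗ⁻¹⁾. Then for every t ≤ l: (E⁽ᵗ⁾)ᵀE⁽ᵗ⁾ = AᵀA − Σ_{s=1}^{t} ω⁽ˢ⁾(ω⁽ˢ⁾)ᵀ and (F⁽ᵗ⁾)ᵀE⁽ᵗ⁾ = BᵀA − Σ_{s=1}^{t} υ⁽ˢ⁾(ω⁽ˢ⁾)ᵀ. In particular, (E⁽ᵗ⁻¹⁾)ᵀE⁽ᵗ⁻¹⁾_{:p_t} = AᵀA_{:p_t} − Σ_{s=1}^{t−1} ω⁽ˢ⁾_{p_t}ω⁽ˢ⁾ and (F⁽ᵗ⁻¹⁾)ᵀE⁽ᵗ⁻¹⁾_{:p_t} = BᵀA_{:p_t}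 − Σ_{s=1}^{t−1} ω⁽ˢ⁾_{p_t}υ⁽ˢ⁾. -/
open Matrix

/-!
Each step deflates `E` and `F` by the same projection `P = e (eᵀ e)⁻¹ eᵀ`. Since `P` is symmetric
and idempotent, `(F - P F)ᵀ (E - P E) = Fᵀ E - Fᵀ P E`, and `Fᵀ P E` is the outer product of
`Fᵀ e / √(eᵀ e)` and `Eᵀ e / √(eᵀ e)`. Telescoping gives the sums, and reading off one column gives
the last two identities.
-/

section RankOneProjection

variable {m n r K : Type*} [Fintype m] [Field K]

/-- The matrix `e (eᵀ e)⁻¹ eᵀ` of the orthogonal projection onto the span of `e`, over any field and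
with respect to the bilinear form `⬝ᵥ`. It is `0` when `e ⬝ᵥ e = 0`. -/
def rankOneProj (e : m → K) : Matrix m m K := (e ⬝ᵥ e)⁻¹ • vecMulVec e e

/-- What is left of the columns of `M` after projecting out `e`. One step of the recursion replaces
`E` and `F` by their residual matrices with respect to the pivot column of `E`. -/
def residualMatrix (e : m → K) (M : Matrix m n K) : Matrix m n K := M - rankOneProj e * M

theorem transpose_rankOneProj (e : m → K) : (rankOneProj e)ᵀ = rankOneProj e := by
  rw [rankOneProj, transpose_smul, transpose_vecMulVec]

theorem isIdempotentElem_rankOneProj {e : m → K} (he : e ⬝ᵥ e ≠ 0) :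
    IsIdempotentElem (rankOneProj e) := by
  rw [IsIdempotentElem, rankOneProj, smul_mul_smul_comm, vecMulVec_mul_vecMulVec, vecMulVec_smul,
    smul_smul, inv_mul_cancel_right₀ he]

theorem transpose_residualMatrix_mul_residualMatrix {e : m → K} (he : e ⬝ᵥ e ≠ 0)
    (G : Matrix m r K) (H : Matrix m n K) :
    (residualMatrix e G)ᵀ * residualMatrix e H = Gᵀ * H - Gᵀ * rankOneProj e * H := by
  have hP : rankOneProj e * (rankOneProj e * H) = rankOneProj e * H := by
    rw [← Matrix.mul_assoc, (isIdempotentElem_rankOneProj he).eq]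
  simp only [residualMatrix, transpose_sub, transpose_mul, transpose_rankOneProj,
    Matrix.mul_sub, Matrix.sub_mul, Matrix.mul_assoc, hP, sub_self, sub_zero]

theorem transpose_mul_rankOneProj_mul {e : m → K} {c : K} (hc : c * c = e ⬝ᵥ e)
    (G : Matrix m r K) (H : Matrix m n K) :
    Gᵀ * rankOneProj e * H = vecMulVec (c⁻¹ • (Gᵀ *ᵥ e)) (c⁻¹ • (Hᵀ *ᵥ e)) := by
  rw [rankOneProj, Matrix.mul_smul, Matrix.smul_mul, mul_vecMulVec, vecMulVec_mul,
    ← mulVec_transpose, smul_vecMulVec, vecMulVec_smul, smul_smul, ← mul_inv, hc]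

theorem transpose_mul_eq_sub_sum_vecMulVec {l : ℕ} {e : ℕ → m → K} {c : ℕ → K}
    {G : ℕ → Matrix m r K} {H : ℕ → Matrix m n K} {u : ℕ → r → K} {v : ℕ → n → K}
    (he : ∀ t < l, e t ⬝ᵥ e t ≠ 0) (hc : ∀ t < l, c t * c t = e t ⬝ᵥ e t)
    (hu : ∀ t < l, u (t + 1) = (c t)⁻¹ • ((G t)ᵀ *ᵥ e t))
    (hv : ∀ t < l, v (t + 1) = (c t)⁻¹ • ((H t)ᵀ *ᵥ e t))
    (hG : ∀ t < l, G (t + 1) = residualMatrix (e t) (G t))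
    (hH : ∀ t < l, H (t + 1) = residualMatrix (e t) (H t)) {t : ℕ} (ht : t ≤ l) :
    (G t)ᵀ * H t = (G 0)ᵀ * H 0 - ∑ s ∈ Finset.Icc 1 t, vecMulVec (u s) (v s) := by
  induction t with
  | zero => simp
  | succ t ih =>
    calc (G (t + 1))ᵀ * H (t + 1)
        = (G t)ᵀ * H t - (G t)ᵀ * rankOneProj (e t) * H t := by
          rw [hG t ht, hH t ht, transpose_residualMatrix_mul_residualMatrix (he t ht)]
      _ = (G t)ᵀ * H t - vecMulVec (u (t + 1)) (v (t + 1)) := by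
          rw [transpose_mul_rankOneProj_mul (hc t ht), ← hu t ht, ← hv t ht]
      _ = (G 0)ᵀ * H 0 - ∑ s ∈ Finset.Icc 1 (t + 1), vecMulVec (u s) (v s) := by
          rw [ih (Nat.le_of_succ_le ht), Finset.sum_Icc_succ_top (Nat.le_add_left 1 t), sub_sub]

end RankOneProjection

theorem mulVec_col_eq_sub_sum_smul {ι k k' m n R : Type*} [Fintype k] [Fintype k']
    [NonUnitalCommRing R] {M : Matrix m k R} {N : Matrix k n R} {M' : Matrix m k' R}
    {N' : Matrix k' n R} {S : Finset ι} {u : ι → m → R} {v : ι → n → R}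
    (h : M * N = M' * N' - ∑ s ∈ S, vecMulVec (u s) (v s)) (q : n) :
    M *ᵥ N.col q = M' *ᵥ N'.col q - ∑ s ∈ S, v s q • u s := by
  ext i
  have hiq : (M *ᵥ N.col q) i = (M' *ᵥ N'.col q) i - ∑ s ∈ S, u s i * v s q :=
    (congrFun₂ h i q).trans <| by
      rw [Matrix.sub_apply, Matrix.sum_apply]
      rfl
  simpa only [Pi.sub_apply, Finset.sum_apply, Pi.smul_apply, smul_eq_mul, mul_comm] using hiq

theorem stmt13_general {m n r K : Type*} [Fintype m] [Field K] (l : ℕ)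
    (A : Matrix m n K) (B : Matrix m r K) (E : ℕ → Matrix m n K) (F : ℕ → Matrix m r K)
    (p : ℕ → n) (c : ℕ → K) (ω : ℕ → n → K) (υ : ℕ → r → K) (hE0 : E 0 = A) (hF0 : F 0 = B)
    (hne : ∀ t < l, (E t).col (p (t + 1)) ⬝ᵥ (E t).col (p (t + 1)) ≠ 0)
    (hc : ∀ t < l, c t * c t = (E t).col (p (t + 1)) ⬝ᵥ (E t).col (p (t + 1)))
    (hω : ∀ t < l, ω (t + 1) = (c t)⁻¹ • ((E t)ᵀ *ᵥ (E t).col (p (t + 1))))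
    (hυ : ∀ t < l, υ (t + 1) = (c t)⁻¹ • ((F t)ᵀ *ᵥ (E t).col (p (t + 1))))
    (hE : ∀ t < l, E (t + 1) = residualMatrix ((E t).col (p (t + 1))) (E t))
    (hF : ∀ t < l, F (t + 1) = residualMatrix ((E t).col (p (t + 1))) (F t)) :
    (∀ t ≤ l,
      (E t)ᵀ * E t = Aᵀ * A - ∑ s ∈ Finset.Icc 1 t, vecMulVec (ω s) (ω s) ∧
      (F t)ᵀ * E t = Bᵀ * A - ∑ s ∈ Finset.Icc 1 t, vecMulVec (υ s) (ω s)) ∧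
    (∀ t < l,
      (E t)ᵀ *ᵥ (E t).col (p (t + 1)) =
        Aᵀ *ᵥ A.col (p (t + 1)) - ∑ s ∈ Finset.Icc 1 t, ω s (p (t + 1)) • ω s ∧
      (F t)ᵀ *ᵥ (E t).col (p (t + 1)) =
        Bᵀ *ᵥ A.col (p (t + 1)) - ∑ s ∈ Finset.Icc 1 t, ω s (p (t + 1)) • υ s) := by
  subst hE0 hF0
  have gram {t : ℕ} (ht : t ≤ l) := transpose_mul_eq_sub_sum_vecMulVec hne hc hω hω hE hE ht
  have cross {t : ℕ} (ht : t ≤ l) := transpose_mul_eq_sub_sum_vecMulVec hne hc hυ hω hF hE ht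
  exact ⟨fun t ht => ⟨gram ht, cross ht⟩, fun t ht =>
    ⟨mulVec_col_eq_sub_sum_smul (gram ht.le) _, mulVec_col_eq_sub_sum_smul (cross ht.le) _⟩⟩

theorem stmt13 {m n r : ℕ} (l : ℕ) (A : Matrix (Fin m) (Fin n) ℝ) (B : Matrix (Fin m) (Fin r) ℝ)
    (E : ℕ → Matrix (Fin m) (Fin n) ℝ) (F : ℕ → Matrix (Fin m) (Fin r) ℝ)
    (p : ℕ → Fin n) (ω : ℕ → Fin n → ℝ) (υ : ℕ → Fin r → ℝ)
    (hE0 : E 0 = A) (hF0 : F 0 = B)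
    (hpos : ∀ t < l, 0 < ((fun i => E t i (p (t + 1))) ⬝ᵥ fun i => E t i (p (t + 1))))
    (hω : ∀ t < l,
      ω (t + 1) =
        (Real.sqrt ((fun i => E t i (p (t + 1))) ⬝ᵥ fun i => E t i (p (t + 1))))⁻¹ •
          ((E t)ᵀ *ᵥ fun i => E t i (p (t + 1))))
    (hυ : ∀ t < l,
      υ (t + 1) =
        (Real.sqrt ((fun i => E t i (p (t + 1))) ⬝ᵥ fun i => E t i (p (t + 1))))⁻¹ •
          ((F t)ᵀ *ᵥ fun i => E t i (p (t + 1))))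
    (hEstep : ∀ t < l,
      E (t + 1) =
        E t - ((((fun i => E t i (p (t + 1))) ⬝ᵥ fun i => E t i (p (t + 1)))⁻¹ •
          vecMulVec (fun i => E t i (p (t + 1))) fun i => E t i (p (t + 1))) * E t))
    (hFstep : ∀ t < l,
      F (t + 1) =
        F t - ((((fun i => E t i (p (t + 1))) ⬝ᵥ fun i => E t i (p (t + 1)))⁻¹ •
          vecMulVec (fun i => E t i (p (t + 1))) fun i => E t i (p (t + 1))) * F t)) :
    (∀ t ≤ l,
      (E t)ᵀ * E t = Aᵀ * A - ∑ s ∈ Finset.Icc 1 t, vecMulVec (ω s) (ω s) ∧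
      (F t)ᵀ * E t = Bᵀ * A - ∑ s ∈ Finset.Icc 1 t, vecMulVec (υ s) (ω s)) ∧
    (∀ t < l,
      ((E t)ᵀ *ᵥ fun i => E t i (p (t + 1))) =
        (Aᵀ *ᵥ fun i => A i (p (t + 1))) - ∑ s ∈ Finset.Icc 1 t, ω s (p (t + 1)) • ω s ∧
      ((F t)ᵀ *ᵥ fun i => E t i (p (t + 1))) =
        (Bᵀ *ᵥ fun i => A i (p (t + 1))) - ∑ s ∈ Finset.Icc 1 t, ω s (p (t + 1)) • υ s) :=
  stmt13_general l A B E F p _ ω υ hE0 hF0 (fun t ht => (hpos t ht).ne')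
    (fun t ht => Real.mul_self_sqrt (hpos t ht).le) hω hυ hEstep hFstep
end
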